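/- arXiv:math/9909168 — 2 statements merged into one kernel-verified Lean document; each statement's English description precedes it below -/
import Mathlib

section
/- Let L be the poset of dual order ideals of ℕⁿ (with its componentwise partial order), ordered by inclusion. Then L contains no infinite antichain; that is, every set of pairwise incomparable upper sets of ℕⁿ is finite. -/
theorem sublistForall₂_get_aux {α : Type*} {r : α → α → Prop} {l₁ l₂ : List α}
    (h : List.SublistForall₂ r l₁ l₂) :
    ∀ (i : ℕ) (a : α), l₁[i]? = some a → ∃ j, i ≤ j ∧ ∃ b, l₂[j]? = some b ∧ r a b := by
  induction h with
  | nil => intro i a h; simp at h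
  | cons hr _ ih =>
    intro i a h
    cases i with
    | zero =>
      simp only [List.getElem?_cons_zero, Option.some.injEq] at h
      subst h
      exact ⟨0, le_rfl, _, by simp, hr⟩
    | succ i =>
      simp only [List.getElem?_cons_succ] at h
      obtain ⟨j, hj, b, hb, hab⟩ := ih i a h
      exact ⟨j + 1, by omega, b, by simpa using hb, hab⟩
  | cons_right _ ih =>
    intro i a h
    obtain ⟨j, hj, b, hb, hab⟩ := ih i a h
    exact ⟨j + 1, by omega, b, by simpa using hb, hab⟩

/-- Slice of an upper set at first coordinate `i`. -/
def upperSlice {n : ℕ} (U : UpperSet (Fin (n + 1) → ℕ)) (i : ℕ) : UpperSet (Fin n → ℕ) :=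
  ⟨{x | (Fin.cons i x : Fin (n + 1) → ℕ) ∈ U}, fun x y hxy hx => by
    refine U.upper (a := (Fin.cons i x : Fin (n + 1) → ℕ)) ?_ hx
    exact Fin.cons_le_cons.2 ⟨le_rfl, hxy⟩⟩

theorem upperSlice_anti {n : ℕ} (U : UpperSet (Fin (n + 1) → ℕ)) : Antitone (upperSlice U) := by
  intro i j hij x hx
  refine U.upper (a := (Fin.cons i x : Fin (n + 1) → ℕ)) ?_ hx
  exact Fin.cons_le_cons.2 ⟨hij, le_rfl⟩

theorem le_of_upperSlice {n : ℕ} {U V : UpperSet (Fin (n + 1) → ℕ)}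
    (h : ∀ i, upperSlice U i ≤ upperSlice V i) : U ≤ V := by
  intro x hx
  have h1 : Fin.tail x ∈ upperSlice V (x 0) := by
    change (Fin.cons (x 0) (Fin.tail x) : Fin (n + 1) → ℕ) ∈ V
    rw [Fin.cons_self_tail]; exact hx
  have h2 := h (x 0) h1
  change (Fin.cons (x 0) (Fin.tail x) : Fin (n + 1) → ℕ) ∈ U at h2
  rw [Fin.cons_self_tail] at h2
  exact h2

theorem upperSlice_stab {n : ℕ} [WellQuasiOrderedLE (UpperSet (Fin n → ℕ))]
    (U : UpperSet (Fin (n + 1) → ℕ)) : ∃ N, ∀ m, N ≤ m → upperSlice U N = upperSlice U m := by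
  obtain ⟨N, hN⟩ := WellFounded.has_min
    (wellFounded_lt (α := UpperSet (Fin n → ℕ))) (Set.range (upperSlice U)) ⟨_, 0, rfl⟩
  obtain ⟨⟨N, rfl⟩, hN⟩ := hN
  refine ⟨N, fun m hm => ?_⟩
  by_contra hne
  exact hN _ ⟨m, rfl⟩ (lt_of_le_of_ne (upperSlice_anti U hm) (Ne.symm hne))

theorem wqo_upperSet_pi (n : ℕ) : WellQuasiOrderedLE (UpperSet (Fin n → ℕ)) := by
  induction n with
  | zero =>
    have : Finite (UpperSet (Fin 0 → ℕ)) :=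
      Finite.of_injective (fun U => (U : Set (Fin 0 → ℕ))) SetLike.coe_injective
    exact Finite.to_wellQuasiOrderedLE
  | succ n ih =>
    choose N hN using fun U : UpperSet (Fin (n + 1) → ℕ) => upperSlice_stab U
    let w : UpperSet (Fin (n + 1) → ℕ) → List (UpperSet (Fin n → ℕ)) :=
      fun U => (List.range (N U + 1)).map (upperSlice U)
    have hw : ∀ U i a, (w U)[i]? = some a ↔ i < N U + 1 ∧ upperSlice U i = a := by
      intro U i a
      simp [w, List.getElem?_eq_some_iff]
    have hH := Set.PartiallyWellOrderedOn.partiallyWellOrderedOn_sublistForall₂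
      (α := UpperSet (Fin n → ℕ)) (· ≤ ·) (s := Set.univ)
      (Set.isPWO_of_wellQuasiOrderedLE _)
    refine ⟨fun f => ?_⟩
    obtain ⟨g, hg⟩ := (wellQuasiOrdered_le (α := UpperSet (Fin n → ℕ))).exists_monotone_subseq
      (fun k => upperSlice (f k) (N (f k)))
    obtain ⟨p, q, hpq, hsub⟩ := hH.exists_lt (f := fun k => w (f (g k))) (by simp)
    have hlim := hg p q hpq.le
    refine ⟨g p, g q, g.lt_iff_lt.2 hpq, le_of_upperSlice fun i => ?_⟩
    have hs := sublistForall₂_get_aux hsub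
    rcases lt_or_ge i (N (f (g p)) + 1) with hi | hi
    · obtain ⟨j, hij, b, hb, hab⟩ := hs i _ ((hw _ _ _).2 ⟨hi, rfl⟩)
      obtain ⟨-, rfl⟩ := (hw _ _ _).1 hb
      exact hab.trans (upperSlice_anti _ hij)
    · rw [← hN (f (g p)) i (by omega)]
      refine hlim.trans ?_
      rw [hN (f (g q)) (max i (N (f (g q)))) (le_max_right _ _)]
      exact upperSlice_anti _ (le_max_left _ _)

/-- **Antichains of dual order ideals of ℕⁿ are finite.**  In the poset of dual order
ideals (upper sets) of `ℕⁿ` with its componentwise order, ordered by inclusion,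
every antichain (collection of pairwise incomparable upper sets) is finite. -/
theorem upperSets_of_Nn_no_infinite_antichain {n : ℕ}
    (𝓐 : Set (Set (Fin n → ℕ))) (hup : ∀ U ∈ 𝓐, IsUpperSet U)
    (hac : IsAntichain (· ⊆ ·) 𝓐) : 𝓐.Finite := by
  have := wqo_upperSet_pi n
  by_contra hinf
  let e := Set.Infinite.natEmbedding 𝓐 hinf
  obtain ⟨p, q, hpq, hle⟩ := (wellQuasiOrdered_le (α := UpperSet (Fin n → ℕ)))
    (fun k => ⟨(e k : Set (Fin n → ℕ)), hup _ (e k).2⟩)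
  have hsub : (e q : Set (Fin n → ℕ)) ⊆ e p := hle
  have heq := hac.eq (e q).2 (e p).2 hsub
  exact hpq.ne' (e.injective (Subtype.ext heq))
end

section
/- Let M be a finitely generated submonoid of ℕⁿ. Call a subset T ⊆ M a monomial ideal of M if t ∈ T and m ∈ M imply t + m ∈ T. Then in any infinite collection 𝓣 of monomial ideals of M there are two distinct members T₁, T₂ ∈ 𝓣 with T₁ ⊆ T₂. -/
/-- Antitone sequences in a well quasi-order, compared pointwise, are well quasi-ordered
(via Higman's lemma). -/
theorem antitone_seq_wqo {Q : Type*} [PartialOrder Q] [hQ : WellQuasiOrderedLE Q]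
    (f : ℕ → ℕ → Q) (hf : ∀ k, Antitone (f k)) : ∃ i j, i < j ∧ f i ≤ f j := by
  have hstab : ∀ k, ∃ N, ∀ m, N ≤ m → f k m = f k N := by
    intro k
    obtain ⟨N, hN⟩ := (wellFounded_lt (α := Q)).has_min (Set.range (f k)) ⟨_, 0, rfl⟩
    obtain ⟨⟨N, rfl⟩, hN⟩ := hN
    refine ⟨N, fun m hm => ?_⟩
    exact eq_of_le_of_not_lt (hf k hm) (hN _ ⟨m, rfl⟩)
  choose N hN using hstab
  have hH : WellQuasiOrdered (List.SublistForall₂ ((· ≤ ·) : Q → Q → Prop)) := by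
    have := Set.PartiallyWellOrderedOn.partiallyWellOrderedOn_sublistForall₂
      ((· ≤ ·) : Q → Q → Prop) (Set.partiallyWellOrderedOn_univ_iff.2 hQ.wqo)
    rw [← Set.partiallyWellOrderedOn_univ_iff]
    exact this.mono (fun l _ x _ => Set.mem_univ x)
  haveI : IsPreorder (List Q) (List.SublistForall₂ ((· ≤ ·) : Q → Q → Prop)) := {}
  obtain ⟨i, j, hij, h1, h2⟩ := (hH.prod hQ.wqo)
    (fun k => ((List.range (N k)).map (f k), f k (N k)))
  refine ⟨i, j, hij, fun m => ?_⟩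
  simp only at h1 h2
  have hlim : f j (N j) ≤ f j m := by
    rcases le_total (N j) m with h | h
    · exact (hN j m h).ge
    · exact hf j h
  rcases le_or_gt (N i) m with h | h
  · rw [hN i m h]
    exact h2.trans hlim
  · obtain ⟨l, hl, hsub⟩ := List.sublistForall₂_iff.1 h1
    obtain ⟨e, he⟩ := List.sublist_iff_exists_orderEmbedding_getElem?_eq.1 hsub
    obtain ⟨hlen, hget⟩ := List.forall₂_iff_get.1 hl
    simp only [List.length_map, List.length_range] at hlen
    have hml : m < l.length := hlen ▸ h
    have h3 := hget m (by simpa using h) hml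
    have h4 := he m
    rw [List.getElem?_eq_getElem hml] at h4
    obtain ⟨h5, h6⟩ := List.getElem?_eq_some_iff.1 h4.symm
    simp only [List.get_eq_getElem, List.getElem_map, List.getElem_range] at h3 h6
    rw [← h6] at h3
    exact h3.trans (hf j (e.strictMono.le_apply))

/-- Maclagan's theorem: upper sets of `ℕᵈ` (ordered by reverse inclusion) are
well quasi-ordered. -/
theorem upperSet_wqo (d : ℕ) : WellQuasiOrderedLE (UpperSet (Fin d → ℕ)) := by
  induction d with
  | zero => exact Finite.to_wellQuasiOrderedLE
  | succ d ih =>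
    refine ⟨fun I => ?_⟩
    let s : ℕ → ℕ → UpperSet (Fin d → ℕ) := fun k m =>
      ⟨{x | (Fin.cons m x : Fin (d + 1) → ℕ) ∈ I k}, fun x y hxy hx =>
        (I k).upper (Fin.cons_le_cons.2 ⟨le_rfl, hxy⟩) hx⟩
    obtain ⟨i, j, hij, h⟩ := antitone_seq_wqo s (fun k a b hab x hx =>
      (I k).upper (Fin.cons_le_cons.2 ⟨hab, le_rfl⟩) hx)
    refine ⟨i, j, hij, fun x hx => ?_⟩
    have := @h (x 0) (Fin.tail x)
    have h2 : (Fin.cons (x 0) (Fin.tail x) : Fin (d + 1) → ℕ) ∈ I j := by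
      rw [Fin.cons_self_tail]; exact hx
    have h3 : (Fin.cons (x 0) (Fin.tail x) : Fin (d + 1) → ℕ) ∈ I i := this h2
    rw [Fin.cons_self_tail] at h3
    exact h3

/-- **Antichains of monomial ideals of an affine semigroup are finite.**  Let `M` be a
finitely generated submonoid of `ℕⁿ`.  A *monomial ideal* of `M` is a subset
`T ⊆ M` with `T + M ⊆ T`.  Then any infinite collection of monomial ideals of `M`
contains two distinct members `T₁ ⊆ T₂`. -/
theorem monomialIdeals_of_submonoid_no_infinite_antichain {n : ℕ}
    (M : AddSubmonoid (Fin n → ℕ)) (hfg : M.FG)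
    (𝓣 : Set (Set (Fin n → ℕ)))
    (hideal : ∀ T ∈ 𝓣, T ⊆ (M : Set (Fin n → ℕ)) ∧
      ∀ t ∈ T, ∀ m ∈ M, t + m ∈ T)
    (hinf : 𝓣.Infinite) :
    ∃ T₁ ∈ 𝓣, ∃ T₂ ∈ 𝓣, T₁ ≠ T₂ ∧ T₁ ⊆ T₂ := by

  obtain ⟨S, rfl⟩ := hfg
  let g : Fin S.card → (Fin n → ℕ) := fun i => (S.equivFin.symm i).1
  have hg : Set.range g = (S : Set (Fin n → ℕ)) := by
    ext x
    constructor
    · rintro ⟨i, rfl⟩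
      exact (S.equivFin.symm i).2
    · intro hx
      exact ⟨S.equivFin ⟨x, hx⟩, by simp [g]⟩
  have hM : ∀ x, x ∈ AddSubmonoid.closure (S : Set (Fin n → ℕ)) ↔
      ∃ a : Fin S.card → ℕ, x = ∑ i, a i • g i := by
    intro x
    rw [← hg, AddSubmonoid.mem_closure_range_iff_of_fintype]
  let T : ℕ → Set (Fin n → ℕ) := fun k => (hinf.natEmbedding _ k).1
  have hT : ∀ k, T k ∈ 𝓣 := fun k => (hinf.natEmbedding _ k).2
  let I : ℕ → UpperSet (Fin S.card → ℕ) := fun k =>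
    ⟨{a | ∑ i, a i • g i ∈ T k}, by
      intro a b hab ha
      have h := (hideal _ (hT k)).2 _ ha _ ((hM _).2 ⟨b - a, rfl⟩)
      rw [← Finset.sum_add_distrib] at h
      have h2 : ∑ i, (a i • g i + (b - a) i • g i) = ∑ i, b i • g i := by
        refine Finset.sum_congr rfl fun i _ => ?_
        rw [← add_smul, Pi.sub_apply, Nat.add_sub_cancel' (hab i)]
      rw [h2] at h
      exact h⟩
  obtain ⟨i, j, hij, h⟩ := (upperSet_wqo S.card).wqo I
  refine ⟨T j, hT j, T i, hT i, ?_, ?_⟩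
  · intro he
    exact hij.ne' ((hinf.natEmbedding _).injective (Subtype.ext he))
  · intro x hx
    obtain ⟨a, rfl⟩ := (hM x).1 ((hideal _ (hT j)).1 hx)
    exact h hx
end
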